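/- arXiv:0706.0225 — 7 statements merged into one kernel-verified Lean document; each statement's English description precedes it below -/
import Mathlib

section
/- Let ρ > 0 and 0 < λ < 1. Then ∫₀^∞ (1+ρx)^{-λ} e^{-x} dx = Γ(1-λ) ρ^{-λ} e^{1/ρ} - (1/(ρ(1-λ))) · Σ_{k=0}^∞ ρ^{-k} / Π_{j=0}^{k-1} (2-λ+j), where Γ is the Gamma function and the series converges. (The series equals the confluent hypergeometric function ₁F₁(1; 2-λ; 1/ρ).) -/
open MeasureTheory Real Set

lemma aux_int (r a : ℝ) (hr : 0 < r) :
    IntervalIntegrable (fun x : ℝ => x ^ (r - 1) * Real.exp (-x)) volume 0 a := by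
  apply (intervalIntegral.intervalIntegrable_rpow' (by linarith)).mul_continuousOn
  fun_prop

lemma aux_rec (r a : ℝ) (hr : 0 < r) (ha : 0 < a) :
    r * (∫ x in (0:ℝ)..a, x ^ (r - 1) * Real.exp (-x)) =
      a ^ r * Real.exp (-a) + ∫ x in (0:ℝ)..a, x ^ (r + 1 - 1) * Real.exp (-x) := by
  have h1 := aux_int r a hr
  have h2 := aux_int (r + 1) a (by linarith)
  have h := intervalIntegral.integral_eq_sub_of_hasDerivAt_of_le (a := 0) (b := a)
    (f := fun x => x ^ r * Real.exp (-x))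
    (f' := fun x => r * (x ^ (r - 1) * Real.exp (-x)) - x ^ (r + 1 - 1) * Real.exp (-x))
    ha.le ?_ ?_ ((h1.const_mul r).sub h2)
  · rw [intervalIntegral.integral_sub (h1.const_mul r) h2,
      intervalIntegral.integral_const_mul] at h
    rw [Real.zero_rpow hr.ne'] at h
    linarith
  · apply ContinuousOn.mul
    · exact (Real.continuous_rpow_const hr.le).continuousOn
    · fun_prop
  · intro x hx
    have e1 := Real.hasDerivAt_rpow_const (x := x) (p := r) (Or.inl hx.1.ne')
    have e2 : HasDerivAt (fun x : ℝ => Real.exp (-x)) (Real.exp (-x) * (-1)) x :=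
      (hasDerivAt_neg x).exp
    refine (e1.mul e2).congr_deriv ?_
    rw [add_sub_cancel_right]
    ring

lemma aux_summable (s a : ℝ) (hs : 0 < s) (ha : 0 < a) :
    Summable (fun k : ℕ => a ^ k / ∏ j ∈ Finset.range k, (s + 1 + (j:ℝ))) := by
  refine Summable.of_nonneg_of_le (fun k => ?_) (fun k => ?_) (Real.summable_pow_div_factorial a)
  · exact div_nonneg (by positivity) (Finset.prod_nonneg fun j _ => by positivity)
  · apply div_le_div_of_nonneg_left (by positivity) (by positivity)
    rw [← Finset.prod_range_add_one_eq_factorial]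
    push_cast
    apply Finset.prod_le_prod
    · intro j _; positivity
    · intro j _; linarith

lemma aux_partial (s a : ℝ) (hs : 0 < s) (ha : 0 < a) (m : ℕ) :
    (∫ x in (0:ℝ)..a, x ^ (s - 1) * Real.exp (-x)) =
      a ^ s * Real.exp (-a) / s *
        (∑ k ∈ Finset.range m, a ^ k / ∏ j ∈ Finset.range k, (s + 1 + (j:ℝ))) +
      (∫ x in (0:ℝ)..a, x ^ (s + m - 1) * Real.exp (-x)) /
        ∏ j ∈ Finset.range m, (s + (j:ℝ)) := by
  induction m with
  | zero => simp
  | succ m ih =>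
    have hsm : 0 < s + m := by positivity
    have hr := aux_rec (s + m) a hsm ha
    have hQ : 0 < ∏ j ∈ Finset.range m, (s + (j:ℝ)) :=
      Finset.prod_pos fun j _ => by positivity
    have hP : 0 < ∏ j ∈ Finset.range m, (s + 1 + (j:ℝ)) :=
      Finset.prod_pos fun j _ => by positivity
    have hPQ : (∏ j ∈ Finset.range m, (s + (j:ℝ))) * (s + m) =
        s * ∏ j ∈ Finset.range m, (s + 1 + (j:ℝ)) := by
      rw [← Finset.prod_range_succ (fun j : ℕ => s + (j:ℝ)), Finset.prod_range_succ', mul_comm]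
      simp only [Nat.cast_zero, add_zero]
      congr 1
      apply Finset.prod_congr rfl
      intro j _
      push_cast; ring
    rw [ih, Finset.sum_range_succ, Finset.prod_range_succ, Nat.cast_succ, ← add_assoc s]
    rw [mul_add, add_assoc]
    congr 1
    rw [Real.rpow_add ha, Real.rpow_natCast] at hr
    have : (∫ x in (0:ℝ)..a, x ^ (s + m - 1) * Real.exp (-x)) /
        ∏ j ∈ Finset.range m, (s + (j:ℝ)) = ((s + m) *
        (∫ x in (0:ℝ)..a, x ^ (s + m - 1) * Real.exp (-x))) /
        ((∏ j ∈ Finset.range m, (s + (j:ℝ))) * (s + m)) := by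
      field_simp
    rw [this, hr, add_div]
    congr 1
    rw [hPQ]
    field_simp

lemma aux_gamma (s a : ℝ) (hs : 0 < s) (ha : 0 < a) :
    (∫ x in (0:ℝ)..a, x ^ (s - 1) * Real.exp (-x)) =
      a ^ s * Real.exp (-a) / s *
        (∑' k : ℕ, a ^ k / ∏ j ∈ Finset.range k, (s + 1 + (j:ℝ))) := by
  have hsum := aux_summable s a hs ha
  set J := ∫ x in (0:ℝ)..a, x ^ (s - 1) * Real.exp (-x) with hJ
  have hrem : Filter.Tendsto (fun m : ℕ => (∫ x in (0:ℝ)..a, x ^ (s + (m + 1 : ℕ) - 1) * Real.exp (-x)) /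
        ∏ j ∈ Finset.range (m+1), (s + (j:ℝ))) Filter.atTop (nhds 0) := by
    have h0 := (hsum.tendsto_atTop_zero).const_mul (a * J / s)
    rw [mul_zero] at h0
    refine squeeze_zero (fun m => ?_) (fun m => ?_) h0
    · apply div_nonneg
      · apply intervalIntegral.integral_nonneg ha.le
        intro u hu
        exact mul_nonneg (Real.rpow_nonneg hu.1 _) (Real.exp_pos _).le
      · exact Finset.prod_nonneg fun j _ => by positivity
    · have hP : 0 < ∏ j ∈ Finset.range m, (s + 1 + (j:ℝ)) :=
        Finset.prod_pos fun j _ => by positivity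
      have hPQ : (∏ j ∈ Finset.range (m+1), (s + (j:ℝ))) =
          s * ∏ j ∈ Finset.range m, (s + 1 + (j:ℝ)) := by
        rw [Finset.prod_range_succ', mul_comm]
        simp only [Nat.cast_zero, add_zero]
        congr 1
        apply Finset.prod_congr rfl
        intro j _
        push_cast; ring
      have hle : (∫ x in (0:ℝ)..a, x ^ (s + (m + 1 : ℕ) - 1) * Real.exp (-x)) ≤ a ^ (m+1) * J := by
        rw [hJ, ← intervalIntegral.integral_const_mul]
        apply intervalIntegral.integral_mono_on_of_le_Ioo ha.le
        · exact aux_int _ _ (by positivity)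
        · exact (aux_int _ _ hs).const_mul _
        · intro x hx
          have : x ^ (s + (m + 1 : ℕ) - 1) = x ^ (m+1) * x ^ (s - 1) := by
            rw [← Real.rpow_natCast, ← Real.rpow_add hx.1]
            congr 1; ring
          rw [this, mul_assoc]
          apply mul_le_mul_of_nonneg_right (pow_le_pow_left₀ hx.1.le hx.2.le _)
          exact mul_nonneg (Real.rpow_nonneg hx.1.le _) (Real.exp_pos _).le
      rw [hPQ]
      calc _ ≤ a ^ (m+1) * J / (s * ∏ j ∈ Finset.range m, (s + 1 + (j:ℝ))) := by gcongr
        _ = _ := by rw [pow_succ]; field_simp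
  have h1 := ((Filter.tendsto_add_atTop_iff_nat 1).2 hsum.hasSum.tendsto_sum_nat).const_mul
    (a ^ s * Real.exp (-a) / s)
  have h2 := h1.add hrem
  rw [add_zero] at h2
  refine tendsto_nhds_unique ?_ h2
  refine (tendsto_const_nhds (x := J)).congr fun m => ?_
  exact aux_partial s a hs ha (m+1)

/-- For `ρ > 0` and `0 < λ < 1`,
`∫₀^∞ (1+ρx)^{-λ} e^{-x} dx
  = Γ(1-λ) ρ^{-λ} e^{1/ρ} - (1/(ρ(1-λ))) · Σ_{k=0}^∞ ρ^{-k} / Π_{j=0}^{k-1}(2-λ+j)`,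
where the series (equal to `₁F₁(1; 2-λ; 1/ρ)`) converges. -/
theorem siso_distortion_gamma_hypergeom (ρ l : ℝ) (hρ : 0 < ρ) (hl0 : 0 < l) (hl1 : l < 1) :
    Summable (fun k : ℕ => ρ ^ (-(k:ℝ)) / ∏ j ∈ Finset.range k, (2 - l + (j:ℝ))) ∧
    (∫ x in Ioi (0:ℝ), (1 + ρ * x) ^ (-l) * Real.exp (-x)) =
      Real.Gamma (1 - l) * ρ ^ (-l) * Real.exp (1 / ρ) -
        (1 / (ρ * (1 - l))) *
          ∑' k : ℕ, ρ ^ (-(k:ℝ)) / ∏ j ∈ Finset.range k, (2 - l + (j:ℝ)) := by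
  have hs : 0 < 1 - l := by linarith
  have ha : 0 < ρ⁻¹ := inv_pos.2 hρ
  have hterm : (fun k : ℕ => ρ ^ (-(k:ℝ)) / ∏ j ∈ Finset.range k, (2 - l + (j:ℝ))) =
      fun k : ℕ => ρ⁻¹ ^ k / ∏ j ∈ Finset.range k, ((1 - l) + 1 + (j:ℝ)) := by
    funext k
    rw [Real.rpow_neg hρ.le, Real.rpow_natCast, inv_pow]
    congr 1
    apply Finset.prod_congr rfl
    intro j _
    ring
  rw [hterm]
  refine ⟨aux_summable _ _ hs ha, ?_⟩
  have hg := aux_gamma (1 - l) ρ⁻¹ hs ha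
  set S := ∑' k : ℕ, ρ⁻¹ ^ k / ∏ j ∈ Finset.range k, ((1 - l) + 1 + (j:ℝ))
  have hGi : IntegrableOn (fun x : ℝ => x ^ (1 - l - 1) * Real.exp (-x)) (Ioi 0) := by
    refine (Real.GammaIntegral_convergent hs).congr_fun (fun x _ => mul_comm _ _) measurableSet_Ioi
  have hG : Real.Gamma (1 - l) = ∫ x in Ioi (0:ℝ), x ^ (1 - l - 1) * Real.exp (-x) := by
    rw [Real.Gamma_eq_integral hs]
    exact integral_congr_ae (Filter.Eventually.of_forall fun x => mul_comm _ _)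
  have hsplit : (∫ x in (0:ℝ)..ρ⁻¹, x ^ (1 - l - 1) * Real.exp (-x)) +
      (∫ x in Ioi ρ⁻¹, x ^ (1 - l - 1) * Real.exp (-x)) = Real.Gamma (1 - l) := by
    rw [hG]
    exact intervalIntegral.integral_interval_add_Ioi hGi (hGi.mono_set (Ioi_subset_Ioi ha.le))
  have hshift : (∫ x in Ioi (0:ℝ), (1 + ρ * x) ^ (-l) * Real.exp (-x)) =
      ρ ^ (-l) * Real.exp ρ⁻¹ * ∫ x in Ioi ρ⁻¹, x ^ (1 - l - 1) * Real.exp (-x) := by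
    have := (measurePreserving_add_right (volume : Measure ℝ) ρ⁻¹).setIntegral_preimage_emb
      (measurableEmbedding_addRight ρ⁻¹)
      (fun x : ℝ => x ^ (1 - l - 1) * Real.exp (-x)) (Ioi ρ⁻¹)
    rw [preimage_add_const_Ioi, sub_self] at this
    rw [← this, ← integral_const_mul]
    apply setIntegral_congr_fun measurableSet_Ioi
    intro x hx
    have hx : 0 < x := hx
    have e : 1 + ρ * x = ρ * (x + ρ⁻¹) := by field_simp; ring
    simp only
    rw [e, Real.mul_rpow hρ.le (by positivity), neg_add, Real.exp_add, Real.exp_neg ρ⁻¹,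
      show 1 - l - 1 = -l by ring]
    field_simp
  have hpow : ρ ^ (-l) * ρ⁻¹ ^ (1 - l) = ρ⁻¹ := by
    rw [Real.inv_rpow hρ.le, ← Real.rpow_neg hρ.le, ← Real.rpow_add hρ, ← Real.rpow_neg_one]
    congr 1; ring
  have hexp : Real.exp ρ⁻¹ * Real.exp (-ρ⁻¹) = 1 := by rw [← Real.exp_add]; simp
  rw [hshift, ← hsplit, hg, one_div]
  have : 1 / (ρ * (1 - l)) * S =
      (ρ ^ (-l) * ρ⁻¹ ^ (1 - l)) * (Real.exp ρ⁻¹ * Real.exp (-ρ⁻¹)) / (1 - l) * S := by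
    rw [hpow, hexp]; field_simp
  rw [this]
  ring
end

section
/- Let ρ > 0 and 0 < λ < 1. Then ∫₀^∞ (1+ρx)^{-λ} e^{-x} dx ≤ (e^{1/ρ} - 1)/(λ - 1) + Γ(1-λ) ρ^{-λ} e^{1/ρ}, where Γ is the Gamma function. (This is the finite-delay upper bound underlying Theorem 2, obtained by lower-bounding ₁F₁(1;2-λ;1/ρ) by (e^{1/ρ}-1)ρ; note the first term on the right is negative.) -/
open MeasureTheory Real Set

lemma siso_aux (a l : ℝ) (ha : 0 < a) (hl0 : 0 < l) (hl1 : l < 1) :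
    a ^ (-l) / (1 - l) * (1 - Real.exp (-a)) ≤
      ∫ t in (0:ℝ)..a, Real.exp (-t) * t ^ (-l) := by
  set m : ℝ := a ^ (-l) / (1 - l) with hm
  have h1l : 0 < 1 - l := by linarith
  have hmpos : 0 < m := by positivity
  set t0 : ℝ := m ^ (-(1 / l)) with ht0
  have ht0pos : 0 < t0 := by positivity
  have ht0m : t0 ^ (-l) = m := by
    rw [ht0, ← Real.rpow_mul hmpos.le]
    have : -(1 / l) * -l = 1 := by field_simp
    rw [this, Real.rpow_one]
  set c : ℝ := Real.exp (-t0) with hc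
  have hi1 : IntervalIntegrable (fun t : ℝ => t ^ (-l)) volume 0 a :=
    intervalIntegral.intervalIntegrable_rpow' (by linarith)
  have hi2 : IntervalIntegrable (fun t : ℝ => Real.exp (-t)) volume 0 a :=
    (by fun_prop : Continuous (fun t : ℝ => Real.exp (-t))).intervalIntegrable _ _
  have hi3 : IntervalIntegrable (fun t : ℝ => Real.exp (-t) * t ^ (-l)) volume 0 a :=
    hi1.continuousOn_mul (by fun_prop)
  have hI1 : ∫ t in (0:ℝ)..a, t ^ (-l) = m * a := by
    rw [integral_rpow (Or.inl (by linarith)), Real.zero_rpow (by linarith), hm,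
      Real.rpow_add ha, Real.rpow_one]
    have : -l + 1 ≠ 0 := by linarith
    field_simp
    ring
  have hI2 : ∫ t in (0:ℝ)..a, Real.exp (-t) = 1 - Real.exp (-a) := by
    rw [intervalIntegral.integral_comp_neg (fun x => Real.exp x)]
    simp
  have hI : ∫ t in (0:ℝ)..a, (m * Real.exp (-t) + (c * t ^ (-l) - c * m)) =
      m * (1 - Real.exp (-a)) := by
    rw [intervalIntegral.integral_add (hi2.const_mul m)
      ((hi1.const_mul c).sub intervalIntegrable_const),
      intervalIntegral.integral_sub (hi1.const_mul c) intervalIntegrable_const,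
      intervalIntegral.integral_const_mul, intervalIntegral.integral_const_mul, hI1, hI2,
      intervalIntegral.integral_const]
    simp
    ring
  rw [← hI]
  apply intervalIntegral.integral_mono_on_of_le_Ioo ha.le
    ((hi2.const_mul m).add ((hi1.const_mul c).sub intervalIntegrable_const)) hi3
  intro t ht
  have key : 0 ≤ (t ^ (-l) - m) * (Real.exp (-t) - c) := by
    rcases le_total t t0 with h | h
    · apply mul_nonneg
      · rw [← ht0m, sub_nonneg]
        exact Real.rpow_le_rpow_of_nonpos ht.1 h (by linarith)
      · rw [hc, sub_nonneg]
        exact Real.exp_le_exp.2 (by linarith)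
    · apply mul_nonneg_of_nonpos_of_nonpos
      · rw [← ht0m, sub_nonpos]
        exact Real.rpow_le_rpow_of_nonpos ht0pos h (by linarith)
      · rw [hc, sub_nonpos]
        exact Real.exp_le_exp.2 (by linarith)
  nlinarith [key]

/-- For `ρ > 0` and `0 < λ < 1`,
`∫₀^∞ (1+ρx)^{-λ} e^{-x} dx ≤ (e^{1/ρ} - 1)/(λ - 1) + Γ(1-λ) ρ^{-λ} e^{1/ρ}`.
This is the finite-delay upper bound underlying Theorem 2. -/
theorem siso_distortion_upper_bound (ρ l : ℝ) (hρ : 0 < ρ) (hl0 : 0 < l) (hl1 : l < 1) :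
    (∫ x in Ioi (0:ℝ), (1 + ρ * x) ^ (-l) * Real.exp (-x)) ≤
      (Real.exp (1 / ρ) - 1) / (l - 1) + Real.Gamma (1 - l) * ρ ^ (-l) * Real.exp (1 / ρ) := by
  set a : ℝ := 1 / ρ with hadef
  have ha : 0 < a := by positivity
  have h1l : 0 < 1 - l := by linarith
  have haux := siso_aux a l ha hl0 hl1
  have hexp : (1 - l) - 1 = -l := by ring
  have hG := Real.Gamma_eq_integral h1l
  have hconv := Real.GammaIntegral_convergent h1l
  rw [hexp] at hG hconv
  have hsplit := intervalIntegral.integral_interval_add_Ioi hconv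
    (hconv.mono_set (Ioi_subset_Ioi ha.le))
  have hshift : (∫ x in Ioi (0:ℝ), Real.exp (-(x + a)) * (x + a) ^ (-l)) =
      ∫ t in Ioi a, Real.exp (-t) * t ^ (-l) := by
    have := (measurePreserving_add_right volume a).setIntegral_preimage_emb
      (measurableEmbedding_addRight a) (fun t : ℝ => Real.exp (-t) * t ^ (-l)) (Ioi a)
    rw [preimage_add_const_Ioi, sub_self] at this
    exact this
  have hL : (∫ x in Ioi (0:ℝ), (1 + ρ * x) ^ (-l) * Real.exp (-x)) =
      ρ ^ (-l) * Real.exp a * ∫ x in Ioi (0:ℝ), Real.exp (-(x + a)) * (x + a) ^ (-l) := by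
    rw [← integral_const_mul]
    apply setIntegral_congr_fun measurableSet_Ioi
    intro x hx
    have hx' : (0:ℝ) < x := hx
    have e1 : 1 + ρ * x = ρ * (x + a) := by rw [hadef]; field_simp; ring
    have e2 : Real.exp (-x) = Real.exp a * Real.exp (-(x + a)) := by
      rw [← Real.exp_add]; congr 1; ring
    simp only
    rw [e1, Real.mul_rpow hρ.le (by linarith), e2]
    ring
  rw [hL, hshift]
  have hρa : ρ ^ (-l) * a ^ (-l) = 1 := by
    rw [← Real.mul_rpow hρ.le ha.le, hadef, mul_one_div_cancel hρ.ne', Real.one_rpow]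
  have hee : Real.exp a * Real.exp (-a) = 1 := by rw [← Real.exp_add]; simp
  have hK : 0 ≤ ρ ^ (-l) * Real.exp a := by positivity
  have h2 := mul_le_mul_of_nonneg_left haux hK
  have h3 : ρ ^ (-l) * Real.exp a * (a ^ (-l) / (1 - l) * (1 - Real.exp (-a))) =
      -((Real.exp a - 1) / (l - 1)) := by
    have : ρ ^ (-l) * Real.exp a * (a ^ (-l) / (1 - l) * (1 - Real.exp (-a))) =
      (ρ ^ (-l) * a ^ (-l)) * (Real.exp a - Real.exp a * Real.exp (-a)) / (1 - l) := by ring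
    rw [this, hρa, hee, one_mul, ← div_neg, neg_sub]
  rw [h3] at h2
  rw [hG, ← hsplit]
  linarith
end

section
/- Fix ρ > 0 and let f(λ) = (e^{1/ρ} - 1)/(λ - 1) + Γ(1-λ) ρ^{-λ} e^{1/ρ} for 0 < λ < 1, where Γ is the Gamma function. Then as λ → 0⁺, f(λ)^{1/λ} converges to exp(1 - e^{1/ρ}(1 - γ + ln ρ)), where γ is the Euler–Mascheroni constant. (This identifies the large-delay limit exp(a) of the distortion upper bound of Theorem 2, with a = 1 - e^{1/ρ} + γe^{1/ρ} - e^{1/ρ} ln ρ.) -/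
open Real Filter Set

/-- Fix `ρ > 0` and let `f(λ) = (e^{1/ρ}-1)/(λ-1) + Γ(1-λ) ρ^{-λ} e^{1/ρ}`.
Then as `λ → 0⁺`, `f(λ)^{1/λ}` converges to
`exp(1 - e^{1/ρ}(1 - γ + ln ρ))`, where `γ` is the Euler–Mascheroni constant. -/
theorem distortion_upper_bound_limit (ρ : ℝ) (hρ : 0 < ρ) :
    Tendsto
      (fun l : ℝ =>
        ((Real.exp (1 / ρ) - 1) / (l - 1) +
            Real.Gamma (1 - l) * ρ ^ (-l) * Real.exp (1 / ρ)) ^ (1 / l))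
      (nhdsWithin 0 (Ioi 0))
      (nhds (Real.exp (1 - Real.exp (1 / ρ) *
        (1 - Real.eulerMascheroniConstant + Real.log ρ)))) := by
  set E := Real.exp (1 / ρ) with hE
  set f : ℝ → ℝ := fun l => (E - 1) / (l - 1) + Real.Gamma (1 - l) * ρ ^ (-l) * E with hf
  have f0 : f 0 = 1 := by
    simp [hf]
    ring
  have hid : HasDerivAt (fun l : ℝ => l) 1 0 := hasDerivAt_id 0
  have hG0 : HasDerivAt Real.Gamma (-Real.eulerMascheroniConstant) (1 - 0) := by
    rw [sub_zero]
    exact Real.hasDerivAt_Gamma_one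
  have hG : HasDerivAt (fun l : ℝ => Real.Gamma (1 - l))
      (-Real.eulerMascheroniConstant * (-1)) 0 :=
    HasDerivAt.comp (0 : ℝ) hG0 (hid.const_sub 1)
  have hP := hid.neg.const_rpow hρ
  have hQ := (hasDerivAt_const (0 : ℝ) (E - 1)).div (hid.sub_const 1) (by norm_num)
  have hd : HasDerivAt f (1 - E * (1 - Real.eulerMascheroniConstant + Real.log ρ)) 0 := by
    have h := hQ.add ((hG.mul hP).mul_const E)
    refine h.congr_deriv ?_
    simp
    ring
  have hl := hd.log (by rw [f0]; norm_num)
  rw [f0, div_one] at hl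
  have ht := hl.tendsto_slope_zero_right
  have hpos : ∀ᶠ l in nhdsWithin (0 : ℝ) (Ioi 0), 0 < f l :=
    nhdsWithin_le_nhds (hd.continuousAt.eventually_const_lt (by rw [f0]; norm_num))
  refine ((Real.continuous_exp.tendsto _).comp ht).congr' ?_
  filter_upwards [hpos] with l h
  change _ = f l ^ (1 / l)
  rw [Real.rpow_def_of_pos h]
  simp [f0, mul_comm]
end

section
/- Let m ≥ 1 be an integer, ρ > 0, and let λ > 0 be a real number that is not an integer. Then (1/(m-1)!) ∫₀^∞ (1+ρx)^{-λ} x^{m-1} e^{-x} dx = (Γ(λ-m)/Γ(λ)) ρ^{-m} Σ_{k=0}^∞ (m)_k/((m-λ+1)_k k!) ρ^{-k} + (Γ(m-λ)/Γ(m)) ρ^{-λ} Σ_{k=0}^∞ (λ)_k/((λ-m+1)_k k!) ρ^{-k}, where both series converge; i.e., the SIMO distortion–delay bound equals Γ(λ-m)/Γ(λ)·ρ^{-m}·₁F₁(m; m-λ+1; 1/ρ) + Γ(m-λ)/Γ(m)·ρ^{-λ}·₁F₁(λ; λ-m+1; 1/ρ). -/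
open MeasureTheory Real Set

noncomputable def kT (a b z : ℝ) (k : ℕ) : ℝ :=
  (∏ j ∈ Finset.range k, (a + j)) / ((∏ j ∈ Finset.range k, (b + j)) * (Nat.factorial k)) * z ^ k

lemma kT_succ (a b z : ℝ) (k : ℕ) :
    kT a b z (k+1) = kT a b z k * ((a + k) * z * ((b + k)⁻¹ * ((k:ℝ)+1)⁻¹)) := by
  unfold kT
  rw [Finset.prod_range_succ, Finset.prod_range_succ, Nat.factorial_succ]
  simp only [div_eq_mul_inv, mul_inv]
  push_cast
  rw [mul_inv]
  ring

lemma kT_summable (a b z : ℝ) : Summable (kT a b z) := by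
  have h : Filter.Tendsto (fun k : ℕ => (a + k) * z * ((b + k)⁻¹ * ((k:ℝ)+1)⁻¹))
      Filter.atTop (nhds 0) := by
    have h1 : Filter.Tendsto (fun k : ℕ => ((b:ℝ) + k)⁻¹) Filter.atTop (nhds 0) :=
      Filter.Tendsto.inv_tendsto_atTop
        (Filter.tendsto_atTop_add_const_left _ _ tendsto_natCast_atTop_atTop)
    have h2 : Filter.Tendsto (fun k : ℕ => ((k:ℝ)+1)⁻¹) Filter.atTop (nhds 0) :=
      Filter.Tendsto.inv_tendsto_atTop
        (Filter.tendsto_atTop_add_const_right _ _ tendsto_natCast_atTop_atTop)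
    have h3 : Filter.Tendsto (fun k : ℕ => z * (b+k)⁻¹ * (1 + (a-1) * ((k:ℝ)+1)⁻¹)) Filter.atTop
        (nhds (z * 0 * (1 + (a-1) * 0))) :=
      (h1.const_mul z).mul ((h2.const_mul (a-1)).const_add 1)
    have e : z * 0 * (1 + (a-1) * 0) = 0 := by ring
    rw [e] at h3
    refine h3.congr (fun k => ?_)
    have : (k:ℝ)+1 ≠ 0 := by positivity
    have e2 : (1 + (a-1) * ((k:ℝ)+1)⁻¹) = (a+k) * ((k:ℝ)+1)⁻¹ := by field_simp; ring
    rw [e2]; ring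
  refine summable_of_ratio_norm_eventually_le (r := 1/2) (by norm_num) ?_
  have h4 := (h.norm).eventually_le_const (u := 1/2) (by norm_num)
  filter_upwards [h4] with k hk
  rw [kT_succ, norm_mul, mul_comm]
  gcongr

lemma prod_shift (b : ℝ) (k : ℕ) :
    b * ∏ j ∈ Finset.range k, (b + 1 + j) = (∏ j ∈ Finset.range k, (b + j)) * (b + k) := by
  rw [← Finset.prod_range_succ, Finset.prod_range_succ', mul_comm]
  push_cast
  simp only [add_zero]
  congr 1
  exact Finset.prod_congr rfl fun j _ => by ring

lemma prod_ne (b : ℝ) (hb : ∀ n : ℤ, b ≠ n) (k : ℕ) : ∏ j ∈ Finset.range k, (b + j) ≠ 0 := by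
  rw [Finset.prod_ne_zero_iff]
  intro j _ h
  exact hb (-j) (by push_cast; linarith)

noncomputable def kM (a b z : ℝ) : ℝ := ∑' k, kT a b z k

lemma nonint_add (b : ℝ) (hb : ∀ n : ℤ, b ≠ n) (m : ℤ) : ∀ n : ℤ, b + m ≠ n := by
  intro n h; exact hb (n - m) (by push_cast; linarith)

lemma contig1 (a b z : ℝ) (hb : ∀ n : ℤ, b ≠ n) :
    (a - b) * kM a (b+1) z = - b * kM a b z + a * kM (a+1) (b+1) z := by
  unfold kM
  rw [← tsum_mul_left, ← tsum_mul_left, ← tsum_mul_left,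
    ← ((kT_summable _ _ _).mul_left _).tsum_add ((kT_summable _ _ _).mul_left _)]
  refine tsum_congr fun k => ?_
  unfold kT
  have h0 : b ≠ 0 := by simpa using hb 0
  have h1 := prod_ne b hb k
  have h2 := prod_ne (b+1) (by simpa using nonint_add b hb 1) k
  have ea := prod_shift a k
  have eb := prod_shift b k
  have hf : (Nat.factorial k : ℝ) ≠ 0 := by positivity
  have hbk : b + k ≠ 0 := fun h => hb (-k) (by push_cast; linarith)
  set A := ∏ j ∈ Finset.range k, (a + j)
  set A' := ∏ j ∈ Finset.range k, (a + 1 + j)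
  set B' := ∏ j ∈ Finset.range k, (b + 1 + j)
  set B := ∏ j ∈ Finset.range k, (b + j)
  have e1 : A / (B * (Nat.factorial k : ℝ)) = A * (b+k) / (b * B' * (Nat.factorial k : ℝ)) := by
    rw [eb]; field_simp
  rw [e1]
  have e2 : a * (A' / (B' * (Nat.factorial k : ℝ)) * z^k) = (a * A') / (B' * (Nat.factorial k : ℝ)) * z^k := by ring
  rw [e2, ea]
  field_simp
  ring

lemma contig2 (a b z : ℝ) (hb : ∀ n : ℤ, b ≠ n) :
    b * kM (a+1) b z = b * kM a b z + z * kM (a+1) (b+1) z := by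
  unfold kM
  rw [(kT_summable (a+1) b z).tsum_eq_zero_add, (kT_summable a b z).tsum_eq_zero_add]
  have s : ∀ a b z : ℝ, Summable (fun k => kT a b z (k+1)) := fun a b z =>
    (summable_nat_add_iff 1).2 (kT_summable a b z)
  rw [mul_add, mul_add, add_assoc]
  have e0 : kT (a+1) b z 0 = kT a b z 0 := by simp [kT]
  rw [e0]
  congr 1
  rw [← tsum_mul_left, ← tsum_mul_left, ← tsum_mul_left,
    ← ((s _ _ _).mul_left _).tsum_add ((kT_summable _ _ _).mul_left _)]
  refine tsum_congr fun k => ?_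
  unfold kT
  have h0 : b ≠ 0 := by simpa using hb 0
  have h1 := prod_ne b hb k
  have h2 := prod_ne (b+1) (by simpa using nonint_add b hb 1) k
  have ea := prod_shift a k
  have eb := prod_shift b k
  have hf : (Nat.factorial k : ℝ) ≠ 0 := by positivity
  have hk : (k:ℝ) + 1 ≠ 0 := by positivity
  have hbk : b + k ≠ 0 := fun h => hb (-k) (by push_cast; linarith)
  rw [Finset.prod_range_succ _ k, Finset.prod_range_succ (fun j : ℕ => b + (j:ℝ)) k,
    Finset.prod_range_succ (fun j : ℕ => a + (j:ℝ)) k, ← ea, ← eb, Nat.factorial_succ]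
  push_cast
  field_simp
  ring

lemma kM_self (a z : ℝ) (ha : ∀ n : ℤ, a ≠ n) : kM a a z = exp z := by
  rw [Real.exp_eq_exp_ℝ, NormedSpace.exp_eq_tsum_div]
  refine tsum_congr fun k => ?_
  unfold kT
  have h1 := prod_ne a ha k
  field_simp

lemma integ_nat (ρ : ℝ) (N : ℕ) : ∀ n : ℕ,
    IntegrableOn (fun x : ℝ => (1 + ρ * x) ^ N * x ^ n * exp (-x)) (Ioi 0) := by
  induction N with
  | zero =>
    intro n
    have := Real.GammaIntegral_convergent (s := n + 1) (by positivity)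
    refine this.congr_fun (fun x hx => ?_) measurableSet_Ioi
    simp [mul_comm]
  | succ N ih =>
    intro n
    have := (ih n).add ((ih (n+1)).const_mul ρ)
    refine this.congr_fun (fun x hx => ?_) measurableSet_Ioi
    simp only [Pi.add_apply]
    ring

lemma integ (ρ l : ℝ) (hρ : 0 < ρ) (n : ℕ) :
    IntegrableOn (fun x : ℝ => (1 + ρ * x) ^ (-l) * x ^ n * exp (-x)) (Ioi 0) := by
  obtain ⟨N, hN⟩ := exists_nat_ge (-l)
  refine Integrable.mono' (integ_nat ρ N n) ?_ ?_
  · refine ContinuousOn.aestronglyMeasurable ?_ measurableSet_Ioi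
    refine ((ContinuousOn.rpow_const (by fun_prop) ?_).mul (by fun_prop)).mul (by fun_prop)
    intro x hx
    have : 0 < x := hx
    left; positivity
  · refine (ae_restrict_mem measurableSet_Ioi).mono fun x hx => ?_
    have hx : 0 < x := hx
    rw [Real.norm_of_nonneg (by positivity)]
    gcongr
    rw [← Real.rpow_natCast]
    exact Real.rpow_le_rpow_of_exponent_le (by nlinarith) hN

noncomputable def kI (ρ l : ℝ) (n : ℕ) : ℝ :=
  (1 / (Nat.factorial n : ℝ)) * ∫ x in Ioi (0:ℝ), (1 + ρ * x) ^ (-l) * x ^ n * exp (-x)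

lemma kI_rec (ρ l : ℝ) (hρ : 0 < ρ) (n : ℕ) :
    kI ρ (l-1) n = kI ρ l n + ρ * (n+1) * kI ρ l (n+1) := by
  unfold kI
  have : ∫ x in Ioi (0:ℝ), (1 + ρ * x) ^ (-(l-1)) * x ^ n * exp (-x) =
     (∫ x in Ioi (0:ℝ), (1 + ρ * x) ^ (-l) * x ^ n * exp (-x)) +
     ρ * ∫ x in Ioi (0:ℝ), (1 + ρ * x) ^ (-l) * x ^ (n+1) * exp (-x) := by
    rw [← integral_const_mul, ← integral_add (integ ρ l hρ n) ((integ ρ l hρ (n+1)).const_mul ρ)]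
    refine setIntegral_congr_fun measurableSet_Ioi fun x hx => ?_
    have hx : 0 < x := hx
    have h : (1 + ρ * x) ^ (-(l-1)) = (1 + ρ * x) ^ (-l) * (1 + ρ * x) := by
      rw [← Real.rpow_add_one (by positivity)]; congr 1; ring
    simp only [h]; ring
  rw [this, Nat.factorial_succ]
  have hf : (Nat.factorial n : ℝ) ≠ 0 := by positivity
  push_cast
  field_simp

noncomputable def uG (z s : ℝ) : ℝ := ∫ u in Ioi z, u ^ (s-1) * exp (-u)

lemma kI_zero (ρ l : ℝ) (hρ : 0 < ρ) :
    kI ρ l 0 = ρ ^ (-l) * exp ρ⁻¹ * uG ρ⁻¹ (1 - l) := by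
  unfold kI uG
  have h := (measurePreserving_add_right (volume : Measure ℝ) ρ⁻¹).setIntegral_preimage_emb
    (measurableEmbedding_addRight ρ⁻¹) (fun u : ℝ => u ^ (1-l-1) * exp (-u)) (Ioi ρ⁻¹)
  have hp : (fun x : ℝ => x + ρ⁻¹) ⁻¹' (Ioi ρ⁻¹) = Ioi (0:ℝ) := by ext x; simp
  rw [hp] at h
  simp only [Nat.factorial_zero, Nat.cast_one, div_one, one_mul]
  rw [← h, ← integral_const_mul]
  refine setIntegral_congr_fun measurableSet_Ioi fun x hx => ?_
  have hx : 0 < x := hx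
  have e : 1 + ρ * x = ρ * (x + ρ⁻¹) := by field_simp; ring
  simp only [pow_zero, mul_one]
  rw [e, Real.mul_rpow hρ.le (by positivity), neg_add, Real.exp_add, Real.exp_neg ρ⁻¹]
  have : exp ρ⁻¹ ≠ 0 := by positivity
  have e2 : 1 - l - 1 = -l := by ring
  rw [e2]
  field_simp

lemma uG_integ (z s : ℝ) (hz : 0 < z) : IntegrableOn (fun u : ℝ => u ^ (s-1) * exp (-u)) (Ioi z) := by
  obtain ⟨N, hN⟩ := exists_nat_ge (s-1)
  have h := ((integ_nat 0 0 N).mono_set (Ioi_subset_Ioi hz.le)).const_mul (z ^ (s-1) * z⁻¹ ^ N)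
  refine Integrable.mono' h ?_ ?_
  · refine ContinuousOn.aestronglyMeasurable ?_ measurableSet_Ioi
    refine (ContinuousOn.rpow_const (by fun_prop) ?_).mul (by fun_prop)
    intro x hx
    have : z < x := hx
    left; simp; linarith
  · refine (ae_restrict_mem measurableSet_Ioi).mono fun x hx => ?_
    have hx : z < x := hx
    have hx0 : 0 < x := hz.trans hx
    rw [Real.norm_of_nonneg (by positivity)]
    have e : x ^ (s-1) = z ^ (s-1) * (z⁻¹ * x) ^ (s-1) := by
      rw [← Real.mul_rpow hz.le (by positivity)]; congr 1; field_simp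
    have e2 : z ^ (s-1) * z⁻¹ ^ N * ((1 + 0 * x) ^ 0 * x ^ N * exp (-x)) =
        z ^ (s-1) * (z⁻¹ * x) ^ N * exp (-x) := by rw [mul_pow]; ring
    rw [e2, e]
    gcongr
    rw [← Real.rpow_natCast]
    refine Real.rpow_le_rpow_of_exponent_le ?_ hN
    rw [inv_mul_eq_div, one_le_div hz]; exact hx.le

lemma uG_rec (z s : ℝ) (hz : 0 < z) : uG z (s+1) = s * uG z s + z ^ s * exp (-z) := by
  unfold uG
  have h := integral_Ioi_of_hasDerivAt_of_tendsto' (a := z) (f := fun u : ℝ => - (u ^ s * exp (-u)))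
    (f' := fun u => u ^ (s+1-1) * exp (-u) - s * (u ^ (s-1) * exp (-u))) (m := 0) ?_ ?_ ?_
  · rw [integral_sub (uG_integ z (s+1) hz) ((uG_integ z s hz).const_mul s), integral_const_mul] at h
    linarith
  · intro x hx
    have hx : 0 < x := lt_of_lt_of_le hz hx
    have h1 := (Real.hasDerivAt_rpow_const (x := x) (p := s) (Or.inl hx.ne'))
    have h2 := (Real.hasDerivAt_exp (-x)).comp x (hasDerivAt_neg x)
    refine (h1.mul h2).neg.congr_deriv ?_
    rw [add_sub_cancel_right]; simp only [Function.comp]; ring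
  · exact (uG_integ z (s+1) hz).sub ((uG_integ z s hz).const_mul s)
  · have := tendsto_rpow_mul_exp_neg_mul_atTop_nhds_zero s 1 one_pos
    simpa using this.neg

noncomputable def lG (z s : ℝ) : ℝ := ∫ u in Ioc 0 z, u ^ (s-1) * exp (-u)

lemma Gamma_split (z s : ℝ) (hz : 0 < z) (hs : 0 < s) : Real.Gamma s = lG z s + uG z s := by
  have hi : IntegrableOn (fun u : ℝ => u ^ (s-1) * exp (-u)) (Ioi 0) :=
    (Real.GammaIntegral_convergent hs).congr_fun (fun x _ => mul_comm _ _) measurableSet_Ioi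
  rw [Real.Gamma_eq_integral hs, lG, uG, ← setIntegral_union Ioc_disjoint_Ioi_same
    measurableSet_Ioi (hi.mono_set Ioc_subset_Ioi_self) (hi.mono_set (Ioi_subset_Ioi hz.le)),
    Ioc_union_Ioi_eq_Ioi hz.le]
  exact setIntegral_congr_fun measurableSet_Ioi (fun x _ => mul_comm _ _)

lemma lG_nonneg (z s : ℝ) : 0 ≤ lG z s :=
  setIntegral_nonneg measurableSet_Ioc fun x hx => by
    have := hx.1
    positivity

lemma lG_le (z s : ℝ) (hs : 0 < s) (n : ℕ) : lG z (s+n) ≤ z ^ n * lG z s := by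
  have hi : ∀ s : ℝ, 0 < s → IntegrableOn (fun u : ℝ => u ^ (s-1) * exp (-u)) (Ioc 0 z) := fun s hs =>
    ((Real.GammaIntegral_convergent hs).congr_fun (fun x _ => mul_comm _ _) measurableSet_Ioi).mono_set Ioc_subset_Ioi_self
  unfold lG
  rw [← integral_const_mul]
  refine setIntegral_mono_on (hi _ (by positivity)) ((hi s hs).const_mul _) measurableSet_Ioc ?_
  intro x hx
  have h0 := hx.1
  have e : s + n - 1 = s - 1 + n := by ring
  rw [e, Real.rpow_add_natCast h0.ne']
  have : x ^ n ≤ z ^ n := by gcongr; exact hx.2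
  calc x ^ (s-1) * x ^ n * exp (-x) = x ^ n * (x ^ (s-1) * exp (-x)) := by ring
    _ ≤ _ := by gcongr

lemma kM_one (b z : ℝ) : kM 1 b z = 1 + z / b * kM 1 (b+1) z := by
  unfold kM
  rw [(kT_summable _ _ _).tsum_eq_zero_add, ← tsum_mul_left]
  congr 1
  · simp [kT]
  refine tsum_congr fun k => ?_
  unfold kT
  rw [Finset.prod_range_succ' (fun j : ℕ => b + (j:ℝ)) k, Nat.factorial_succ,
    Finset.prod_range_succ]
  have e : ∏ j ∈ Finset.range k, (b + ((j+1 : ℕ):ℝ)) = ∏ j ∈ Finset.range k, (b + 1 + j) :=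
    Finset.prod_congr rfl fun j _ => by push_cast; ring
  rw [e]
  push_cast
  have hk : (k:ℝ) + 1 ≠ 0 := by positivity
  have hk' : 1 + (k:ℝ) ≠ 0 := by positivity
  simp only [div_eq_mul_inv, mul_inv, add_zero]
  rw [pow_succ]
  field_simp
  ring

lemma kM_one_bd (b z : ℝ) (hb : 1 ≤ b) (hz : 0 < z) : 0 ≤ kM 1 b z ∧ kM 1 b z ≤ exp z := by
  constructor
  · refine tsum_nonneg fun k => ?_
    unfold kT
    have : 0 ≤ ∏ j ∈ Finset.range k, (b + j) := Finset.prod_nonneg fun j _ => by positivity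
    have : 0 ≤ ∏ j ∈ Finset.range k, ((1:ℝ) + j) := Finset.prod_nonneg fun j _ => by positivity
    positivity
  · rw [Real.exp_eq_exp_ℝ, NormedSpace.exp_eq_tsum_div]
    refine (kT_summable _ _ _).tsum_le_tsum (fun k => ?_) (Real.summable_pow_div_factorial z)
    unfold kT
    have h1 : 0 < ∏ j ∈ Finset.range k, (b + j) := Finset.prod_pos fun j _ => by positivity
    have h2 : ∏ j ∈ Finset.range k, ((1:ℝ) + j) ≤ ∏ j ∈ Finset.range k, (b + j) :=
      Finset.prod_le_prod (fun j _ => by positivity) fun j _ => by gcongr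
    rw [div_mul_eq_mul_div, div_le_div_iff₀ (by positivity) (by positivity)]
    calc _ = (∏ j ∈ Finset.range k, ((1:ℝ) + j)) * (z^k * k.factorial) := by ring
      _ ≤ (∏ j ∈ Finset.range k, (b + j)) * (z^k * k.factorial) := by gcongr
      _ = _ := by ring

noncomputable def kD (z s : ℝ) : ℝ :=
  Real.Gamma s - uG z s - exp (-z) * (z ^ s / s) * kM 1 (s+1) z

lemma kD_rec (z s : ℝ) (hz : 0 < z) (hs : s ≠ 0) : kD z (s+1) = s * kD z s := by
  unfold kD
  rw [Real.Gamma_add_one hs, uG_rec z s hz, kM_one (s+1), Real.rpow_add_one hz.ne']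
  field_simp
  ring

lemma kD_iter (z s : ℝ) (hz : 0 < z) (hs : 0 < s) (n : ℕ) :
    kD z (s+n) = (∏ j ∈ Finset.range n, (s + j)) * kD z s := by
  induction n with
  | zero => simp
  | succ n ih =>
    have : s + ((n+1 : ℕ):ℝ) = s + n + 1 := by push_cast; ring
    rw [this, kD_rec z _ hz (by positivity), ih, Finset.prod_range_succ]; ring

lemma kD_bd (z s : ℝ) (hz : 0 < z) (hs : 0 < s) (n : ℕ) :
    |kD z (s+n)| ≤ z ^ n * (lG z s + z ^ s / s) := by
  have h1 := lG_le z s hs n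
  have h2 := lG_nonneg z (s+n)
  obtain ⟨h3, h4⟩ := kM_one_bd (s+n+1) z (by linarith [show (0:ℝ) ≤ n by positivity]) hz
  have h5 : exp (-z) * kM 1 (s+n+1) z ≤ 1 := by
    calc _ ≤ exp (-z) * exp z := by gcongr
      _ = 1 := by rw [← Real.exp_add]; simp
  have h6 : 0 ≤ exp (-z) * kM 1 (s+n+1) z := by positivity
  have h7 : z ^ (s+n) / (s+n) ≤ z ^ n * (z ^ s / s) := by
    rw [Real.rpow_add_natCast hz.ne', mul_comm, mul_div_assoc]
    gcongr
    simp
  have h8 : 0 ≤ z ^ (s+n) / (s+n) := by positivity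
  have h9 : z ^ (s+n) / (s+n) * (exp (-z) * kM 1 (s+n+1) z) ≤ z ^ (s+n) / (s+n) :=
    mul_le_of_le_one_right h8 h5
  have h10 : 0 ≤ z ^ (s+n) / (s+n) * (exp (-z) * kM 1 (s+n+1) z) := by positivity
  have e : kD z (s+n) = lG z (s+n) - z ^ (s+n) / (s+n) * (exp (-z) * kM 1 (s+n+1) z) := by
    unfold kD
    rw [Gamma_split z (s+n) hz (by positivity)]; ring
  rw [e, abs_le, mul_add]
  constructor <;> nlinarith

lemma kD_pos (z s : ℝ) (hz : 0 < z) (hs : 0 < s) : kD z s = 0 := by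
  have ht := (kT_summable 1 s z).tendsto_atTop_zero.mul_const (lG z s + z ^ s / s)
  rw [zero_mul] at ht
  have hle : |kD z s| ≤ 0 := by
    refine ge_of_tendsto' ht fun n => ?_
    have h := kD_bd z s hz hs n
    rw [kD_iter z s hz hs] at h
    have h1 : 0 < ∏ j ∈ Finset.range n, (s + j) := Finset.prod_pos fun j _ => by positivity
    rw [abs_mul, abs_of_pos h1] at h
    have e : ∏ j ∈ Finset.range n, ((1:ℝ) + j) = n.factorial := by
      rw [← Finset.prod_range_add_one_eq_factorial]; push_cast
      exact Finset.prod_congr rfl fun j _ => by ring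
    unfold kT
    rw [e]
    have : (n.factorial : ℝ) ≠ 0 := by positivity
    have e2 : (n.factorial : ℝ) / ((∏ j ∈ Finset.range n, (s + j)) * n.factorial) * z ^ n * (lG z s + z ^ s / s)
      = (z ^ n * (lG z s + z ^ s / s)) / (∏ j ∈ Finset.range n, (s + j)) := by
      field_simp
    rw [e2, le_div_iff₀ h1, mul_comm]; exact h
  exact abs_nonpos_iff.1 hle

lemma kD_zero (z : ℝ) (hz : 0 < z) (n : ℕ) : ∀ s : ℝ, (∀ k : ℤ, s ≠ k) → -n < s → kD z s = 0 := by
  induction n with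
  | zero => intro s _ h; exact kD_pos z s hz (by simpa using h)
  | succ n ih =>
    intro s hs h
    have h0 : s ≠ 0 := by simpa using hs 0
    have h1 := ih (s+1) (by simpa using nonint_add s hs 1) (by push_cast at h; linarith)
    rw [kD_rec z s hz h0] at h1
    exact (mul_eq_zero.1 h1).resolve_left h0

noncomputable def kR (ρ l m : ℝ) : ℝ :=
  (Real.Gamma (l - m) / Real.Gamma l) * ρ ^ (-m) * kM m (m-l+1) ρ⁻¹ +
  (Real.Gamma (m - l) / Real.Gamma m) * ρ ^ (-l) * kM l (l-m+1) ρ⁻¹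

lemma Gamma_ne (s : ℝ) (hs : ∀ k : ℤ, s ≠ k) : Real.Gamma s ≠ 0 :=
  Real.Gamma_ne_zero fun m h => hs (-m) (by push_cast; exact h)

lemma base (ρ l : ℝ) (hρ : 0 < ρ) (hl : ∀ k : ℤ, l ≠ k) : kI ρ l 0 = kR ρ l 1 := by
  have hs : ∀ k : ℤ, 1 - l ≠ k := fun k h => hl (1-k) (by push_cast; linarith)
  obtain ⟨n, hn⟩ := exists_nat_gt (-(1-l))
  have h := kD_zero ρ⁻¹ (by positivity) n (1-l) hs (by linarith)
  unfold kD at h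
  rw [kI_zero ρ l hρ, kR, show l - 1 + 1 = l by ring, kM_self l _ hl, Real.Gamma_one]
  have hu : uG ρ⁻¹ (1-l) = Real.Gamma (1-l) - exp (-ρ⁻¹) * (ρ⁻¹ ^ (1-l) / (1-l)) * kM 1 (1-l+1) ρ⁻¹ := by
    linarith
  have hl1 : l - 1 ≠ 0 := by have := hl 1; simp at this; exact sub_ne_zero.2 this
  have hl2 : 1 - l ≠ 0 := by intro h; apply hl1; linarith
  have hg : Real.Gamma l = (l-1) * Real.Gamma (l-1) := by
    rw [← Real.Gamma_add_one hl1]; congr 1; ring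
  have hgn : Real.Gamma (l-1) ≠ 0 := by
    apply Gamma_ne; simpa [sub_eq_add_neg] using nonint_add l hl (-1)
  have hr : ρ⁻¹ ^ (1-l) = ρ ^ (-1:ℝ) / ρ ^ (-l) := by
    rw [← Real.rpow_sub hρ, Real.inv_rpow hρ.le, ← Real.rpow_neg hρ.le]; congr 1; ring
  have hr0 : ρ ^ (-l) ≠ 0 := by positivity
  rw [hu, hg, hr, Real.exp_neg]
  have : exp ρ⁻¹ ≠ 0 := by positivity
  have e : (1-l) = -(l-1) := by ring
  generalize kM 1 (1-l+1) ρ⁻¹ = K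
  generalize Real.Gamma (1-l) = G
  rw [e]
  field_simp
  ring

lemma kR_rec (ρ l m : ℝ) (hρ : 0 < ρ) (hm : 0 < m) (hl : ∀ k : ℤ, l ≠ k) (hlm : ∀ k : ℤ, l - m ≠ k) :
    kR ρ (l-1) m = kR ρ l m + ρ * m * kR ρ l (m+1) := by
  have hml : ∀ k : ℤ, m - l ≠ k := fun k h => hlm (-k) (by push_cast; linarith)
  have c1 := contig1 m (m-l+1) ρ⁻¹ (by simpa using nonint_add _ hml 1)
  have c2 := contig2 (l-1) (l-m) ρ⁻¹ hlm
  rw [show l - 1 + 1 = l by ring] at c2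
  have hl1 : l - 1 ≠ 0 := by have := hl 1; simp at this; exact sub_ne_zero.2 this
  have hml0 : m - l ≠ 0 := by simpa using hml 0
  have hlm1 : l - m - 1 ≠ 0 := by have := hlm 1; simp at this; exact sub_ne_zero.2 this
  have g1 : Real.Gamma l = (l-1) * Real.Gamma (l-1) := by
    rw [← Real.Gamma_add_one hl1]; congr 1; ring
  have g2 : Real.Gamma (l-m) = (l-m-1) * Real.Gamma (l-m-1) := by
    rw [← Real.Gamma_add_one hlm1]; congr 1; ring
  have g3 : Real.Gamma (m-l+1) = (m-l) * Real.Gamma (m-l) := Real.Gamma_add_one hml0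
  have g4 : Real.Gamma (m+1) = m * Real.Gamma m := Real.Gamma_add_one hm.ne'
  have n1 : Real.Gamma (l-1) ≠ 0 := by
    apply Gamma_ne; simpa [sub_eq_add_neg] using nonint_add l hl (-1)
  have n2 : Real.Gamma m ≠ 0 := (Real.Gamma_pos_of_pos hm).ne'
  have r1 : ρ ^ (-(m+1)) = ρ ^ (-m) * ρ⁻¹ := by
    rw [neg_add, Real.rpow_add hρ, Real.rpow_neg_one]
  have r2 : ρ ^ (-(l-1)) = ρ ^ (-l) * ρ := by
    rw [← Real.rpow_add_one hρ.ne']; congr 1; ring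
  unfold kR
  rw [show l - 1 - m = l - m - 1 by ring, show m - (l-1) = m - l + 1 by ring,
    show l - m - 1 + 1 = l - m by ring, show l - (m+1) = l - m - 1 by ring,
    show m + 1 - l = m - l + 1 by ring, show l - m - 1 + 1 = l - m by ring, g4, g3, g2, g1, r1, r2]
  generalize kM m (m-l+1+1) ρ⁻¹ = K1 at *
  generalize kM m (m-l+1) ρ⁻¹ = K2 at *
  generalize kM (m+1) (m-l+1+1) ρ⁻¹ = K3 at *
  generalize kM l (l-m) ρ⁻¹ = L1 at *
  generalize kM (l-1) (l-m) ρ⁻¹ = L2 at *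
  generalize kM l (l-m+1) ρ⁻¹ = L3 at *
  generalize Real.Gamma (l-m-1) = G1 at *
  generalize Real.Gamma (l-1) = G2 at *
  generalize Real.Gamma (m-l) = G3 at *
  generalize Real.Gamma m = G4 at *
  generalize ρ ^ (-m) = P at *
  generalize ρ ^ (-l) = Q at *
  have c1' : (l-1) * K1 = (l-m-1) * K2 + m * K3 := by linear_combination c1
  have c2' : L3 = ρ * (l-m) * (L1 - L2) := by
    field_simp at c2
    linear_combination -c2
  have t1 : G1 / G2 * P * K1 = (l-m-1) * G1 / ((l-1) * G2) * P * K2 +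
     ρ * m * (G1 / ((l-1)*G2) * (P * ρ⁻¹) * K3) := by
    field_simp
    linear_combination G1 * P * c1'
  have t2 : (m-l)*G3 / G4 * (Q*ρ) * L2 = G3 / G4 * Q * L3 +
     ρ * m * ((m-l)*G3 / (m * G4) * Q * L1) := by
    rw [c2']
    field_simp
    ring
  linear_combination t1 + t2

lemma main_eq (ρ : ℝ) (hρ : 0 < ρ) (n : ℕ) : ∀ l : ℝ, (∀ k : ℤ, l ≠ k) → kI ρ l n = kR ρ l (n+1) := by
  induction n with
  | zero => intro l hl; simpa using base ρ l hρ hl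
  | succ n ih =>
    intro l hl
    have hl1 : ∀ k : ℤ, l - 1 ≠ k := by simpa [sub_eq_add_neg] using nonint_add l hl (-1)
    have hlm : ∀ k : ℤ, l - ((n:ℝ)+1) ≠ k := fun k h => hl (k + (n+1)) (by push_cast; linarith)
    have h1 := kI_rec ρ l hρ n
    have h2 := kR_rec ρ l (n+1) hρ (by positivity) hl hlm
    rw [ih l hl, ih (l-1) hl1, h2] at h1
    have h3 : ρ * ((n:ℝ)+1) ≠ 0 := by positivity
    push_cast
    exact (mul_left_cancel₀ h3 (add_left_cancel h1)).symm

/-- **SIMO distortion–delay bound (Corollary 2).** For an integer `m ≥ 1`,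
`ρ > 0` and a non-integer real `λ > 0`,
`(1/(m-1)!) ∫₀^∞ (1+ρx)^{-λ} x^{m-1} e^{-x} dx
  = Γ(λ-m)/Γ(λ) · ρ^{-m} · ₁F₁(m; m-λ+1; 1/ρ)
    + Γ(m-λ)/Γ(m) · ρ^{-λ} · ₁F₁(λ; λ-m+1; 1/ρ)`,
with both confluent hypergeometric series convergent. -/
theorem simo_distortion_delay (m : ℕ) (hm : 1 ≤ m) (ρ l : ℝ) (hρ : 0 < ρ) (hl : 0 < l)
    (hlint : ∀ n : ℤ, l ≠ n) :
    Summable (fun k : ℕ =>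
      (∏ j ∈ Finset.range k, ((m:ℝ) + j)) /
        ((∏ j ∈ Finset.range k, ((m:ℝ) - l + 1 + j)) * (Nat.factorial k)) * ρ ^ (-(k:ℝ))) ∧
    Summable (fun k : ℕ =>
      (∏ j ∈ Finset.range k, (l + j)) /
        ((∏ j ∈ Finset.range k, (l - (m:ℝ) + 1 + j)) * (Nat.factorial k)) * ρ ^ (-(k:ℝ))) ∧
    (1 / (Nat.factorial (m - 1) : ℝ)) *
        ∫ x in Ioi (0:ℝ), (1 + ρ * x) ^ (-l) * x ^ (m - 1) * Real.exp (-x) =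
      (Real.Gamma (l - m) / Real.Gamma l) * ρ ^ (-(m:ℝ)) *
          ∑' k : ℕ, (∏ j ∈ Finset.range k, ((m:ℝ) + j)) /
            ((∏ j ∈ Finset.range k, ((m:ℝ) - l + 1 + j)) * (Nat.factorial k)) * ρ ^ (-(k:ℝ)) +
        (Real.Gamma ((m:ℝ) - l) / Real.Gamma m) * ρ ^ (-l) *
          ∑' k : ℕ, (∏ j ∈ Finset.range k, (l + j)) /
            ((∏ j ∈ Finset.range k, (l - (m:ℝ) + 1 + j)) * (Nat.factorial k)) * ρ ^ (-(k:ℝ)) := by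
  have hp : ∀ k : ℕ, ρ ^ (-(k:ℝ)) = ρ⁻¹ ^ k := fun k => by
    rw [Real.rpow_neg hρ.le, Real.rpow_natCast, inv_pow]
  obtain ⟨n, rfl⟩ : ∃ n, m = n + 1 := ⟨m - 1, by omega⟩
  have h := main_eq ρ hρ n l hlint
  unfold kI kR kM kT at h
  refine ⟨?_, ?_, ?_⟩
  · simp only [hp]; exact kT_summable _ _ _
  · simp only [hp]; exact kT_summable _ _ _
  · have e : ((n + 1 : ℕ) : ℝ) = (n:ℝ) + 1 := by push_cast; rfl
    have h' := hp
    rw [Nat.add_sub_cancel]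
    simp_rw [hp]
    rw [h, ← hp (n+1), e]
end

section
/- Let M ≥ 1 be an integer, let d ≥ 0 be an integer, and let c > 0 be a real number. Then the infimum over all vectors α = (α₁,…,α_M) with α₁ ≥ α₂ ≥ ⋯ ≥ α_M ≥ 0 of Σ_{i=1}^M [(2i-1+d)α_i + c·max(1-α_i, 0)] equals Σ_{i=1}^M min(c, 2i-1+d), and the infimum is attained with each α_i ∈ {0,1}. (With c = θKη = η/τₙ, M = min(M_t,M_r), d = |M_t-M_r|, this yields the buffered distortion SNR exponent α(η) = τₙ Σ_{i=1}^{M_*} min(η/τₙ, 2i-1+|M_t-M_r|) of Theorem 4.) -/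
open Finset

/-- **Optimization underlying the buffered distortion SNR exponent (Theorem 4).**
For integers `M ≥ 1`, `d ≥ 0` and a real `c > 0`, the infimum over all vectors
`α₁ ≥ α₂ ≥ ⋯ ≥ α_M ≥ 0` of `Σ_{i=1}^M [(2i-1+d)α_i + c·max(1-α_i,0)]` equals
`Σ_{i=1}^M min(c, 2i-1+d)` (here indexed by `i : Fin M`, so `2i-1+d` becomes
`2i+1+d`), and the infimum is attained with each `α_i ∈ {0,1}`. -/
theorem snr_exponent_optimization (M d : ℕ) (hM : 1 ≤ M) (c : ℝ) (hc : 0 < c) :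
    IsLeast
      {v : ℝ | ∃ α : Fin M → ℝ,
        (∀ i j : Fin M, i ≤ j → α j ≤ α i) ∧ (∀ i, 0 ≤ α i) ∧
        v = ∑ i : Fin M, ((2 * (i : ℝ) + 1 + d) * α i + c * max (1 - α i) 0)}
      (∑ i : Fin M, min c (2 * (i : ℝ) + 1 + d)) ∧
    ∃ α : Fin M → ℝ,
      (∀ i j : Fin M, i ≤ j → α j ≤ α i) ∧ (∀ i, α i = 0 ∨ α i = 1) ∧
      (∑ i : Fin M, ((2 * (i : ℝ) + 1 + d) * α i + c * max (1 - α i) 0)) =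
        ∑ i : Fin M, min c (2 * (i : ℝ) + 1 + d) := by
  have key : ∃ α : Fin M → ℝ,
      (∀ i j : Fin M, i ≤ j → α j ≤ α i) ∧ (∀ i, α i = 0 ∨ α i = 1) ∧
      (∑ i : Fin M, ((2 * (i : ℝ) + 1 + d) * α i + c * max (1 - α i) 0)) =
        ∑ i : Fin M, min c (2 * (i : ℝ) + 1 + d) := by
    refine ⟨fun i => if 2 * (i : ℝ) + 1 + d ≤ c then 1 else 0, ?_, ?_, ?_⟩
    · intro i j hij
      have h : ((i : ℕ) : ℝ) ≤ ((j : ℕ) : ℝ) := by exact_mod_cast hij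
      dsimp only
      split_ifs <;> linarith
    · intro i
      dsimp only
      split_ifs <;> simp
    · refine Finset.sum_congr rfl fun i _ => ?_
      dsimp only
      split_ifs with h
      · rw [min_eq_right h]; simp
      · rw [min_eq_left (not_le.mp h).le]; simp
  refine ⟨⟨?_, ?_⟩, key⟩
  · obtain ⟨α, h1, h2, h3⟩ := key
    refine ⟨α, h1, fun i => ?_, h3.symm⟩
    rcases h2 i with h | h <;> rw [h] <;> norm_num
  · rintro v ⟨α, -, h0, rfl⟩
    refine Finset.sum_le_sum fun i _ => ?_
    have ha := h0 i
    have hw : (0 : ℝ) ≤ 2 * (i : ℝ) + 1 + d := by positivity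
    generalize (2 * (i : ℝ) + 1 + d) = w at *
    have hl := min_le_left c w
    have hr := min_le_right c w
    rcases le_total (α i) 1 with h | h
    · rw [max_eq_left (by linarith)]
      nlinarith [mul_le_mul_of_nonneg_right hr ha,
        mul_le_mul_of_nonneg_right hl (sub_nonneg.mpr h)]
    · rw [max_eq_right (by linarith)]
      nlinarith [mul_le_mul_of_nonneg_left h hw]
end

section
/- For every s > 0, lim_{ρ→∞} -ln(∫₀^∞ (1+ρx)^{-s} e^{-x} dx)/ln ρ = min(s, 1). Consequently, for the buffered SISO Rayleigh channel with bandwidth ratio η > 0 and normalized delay τₙ > 0 (so s = η/τₙ), the distortion SNR exponent is lim_{ρ→∞} -ln D(ρ)/ln ρ = τₙ min(η/τₙ, 1) = min(η, τₙ), where D(ρ) = (∫₀^∞ (1+ρx)^{-η/τₙ} e^{-x} dx)^{τₙ}. (This is the SISO special case of Theorem 4.) -/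
open MeasureTheory Real Filter Set

lemma siso_aux_bound (s t ρ x : ℝ) (ht : 0 < t) (hts : t ≤ s) (hρ : 0 < ρ) (hx : 0 < x) :
    (1 + ρ * x) ^ (-s) * Real.exp (-x) ≤ ρ ^ (-t) * (Real.exp (-x) * x ^ ((1 - t) - 1)) := by
  have h0 : 0 < ρ * x := mul_pos hρ hx
  have h1 : (1 + ρ * x) ^ (-s) ≤ (1 + ρ * x) ^ (-t) :=
    Real.rpow_le_rpow_of_exponent_le (by linarith) (by linarith)
  have h2 : (1 + ρ * x) ^ (-t) ≤ (ρ * x) ^ (-t) :=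
    Real.rpow_le_rpow_of_nonpos h0 (by linarith) (by linarith)
  have h3 : (ρ * x) ^ (-t) = ρ ^ (-t) * x ^ (-t) := Real.mul_rpow hρ.le hx.le
  have h4 : (1 - t) - 1 = -t := by ring
  rw [h4]
  have := mul_le_mul_of_nonneg_right (h1.trans h2) (Real.exp_pos (-x)).le
  rw [h3] at this
  linarith

lemma siso_aux_int (s ρ : ℝ) (hs : 0 < s) (hρ : 0 < ρ) :
    IntegrableOn (fun x : ℝ => (1 + ρ * x) ^ (-s) * Real.exp (-x)) (Ioi 0) := by
  have hg : IntegrableOn (fun x : ℝ => Real.exp (-x)) (Ioi 0) := integrableOn_exp_neg_Ioi 0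
  refine Integrable.mono' hg (by fun_prop) ?_
  filter_upwards [ae_restrict_mem measurableSet_Ioi] with x hx
  have hx' : (0:ℝ) < x := hx
  have h0 : 0 < ρ * x := mul_pos hρ hx'
  rw [Real.norm_of_nonneg (by positivity)]
  have : (1 + ρ * x) ^ (-s) ≤ 1 :=
    Real.rpow_le_one_of_one_le_of_nonpos (by linarith) (by linarith)
  nlinarith [Real.exp_pos (-x)]

lemma siso_aux_upper (s t ρ : ℝ) (hs : 0 < s) (ht : 0 < t) (ht1 : t < 1) (hts : t ≤ s)
    (hρ : 0 < ρ) :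
    ∫ x in Ioi (0:ℝ), (1 + ρ * x) ^ (-s) * Real.exp (-x) ≤ ρ ^ (-t) * Real.Gamma (1 - t) := by
  rw [Real.Gamma_eq_integral (by linarith), ← integral_const_mul]
  refine setIntegral_mono_on (siso_aux_int s ρ hs hρ)
    ((Real.GammaIntegral_convergent (by linarith)).const_mul _) measurableSet_Ioi ?_
  intro x hx
  exact siso_aux_bound s t ρ x ht hts hρ hx

lemma siso_aux_lower (s ρ a : ℝ) (hs : 0 < s) (hρ : 0 < ρ) (ha : 0 < a) (ha1 : a ≤ 1) :
    a * ((1 + ρ * a) ^ (-s) * Real.exp (-1)) ≤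
      ∫ x in Ioi (0:ℝ), (1 + ρ * x) ^ (-s) * Real.exp (-x) := by
  have hint := siso_aux_int s ρ hs hρ
  have hsub : Ioc 0 a ⊆ Ioi (0:ℝ) := fun x hx => hx.1
  calc a * ((1 + ρ * a) ^ (-s) * Real.exp (-1))
      = ∫ x in Ioc (0:ℝ) a, ((1 + ρ * a) ^ (-s) * Real.exp (-1)) := by
        simp [ha.le]
    _ ≤ ∫ x in Ioc (0:ℝ) a, (1 + ρ * x) ^ (-s) * Real.exp (-x) := by
        refine setIntegral_mono_on (integrableOn_const (by simp)) (hint.mono_set hsub)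
          measurableSet_Ioc ?_
        intro x hx
        have hx0 : 0 < ρ * x := mul_pos hρ hx.1
        have hxa : ρ * x ≤ ρ * a := mul_le_mul_of_nonneg_left hx.2 hρ.le
        have h1 : (1 + ρ * a) ^ (-s) ≤ (1 + ρ * x) ^ (-s) :=
          Real.rpow_le_rpow_of_nonpos (by linarith) (by linarith) (by linarith)
        have h2 : Real.exp (-1) ≤ Real.exp (-x) := Real.exp_le_exp.2 (by linarith [hx.2])
        exact mul_le_mul h1 h2 (Real.exp_pos _).le (by positivity)
    _ ≤ _ := by
        refine setIntegral_mono_set hint ?_ (Eventually.of_forall hsub)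
        filter_upwards [ae_restrict_mem measurableSet_Ioi] with x hx
        have hx' : (0:ℝ) < x := hx
        simp only [Pi.zero_apply]
        positivity

lemma siso_aux_lower' (s ρ : ℝ) (hs : 0 < s) (hρ : 1 ≤ ρ) :
    (2 ^ (-s) * Real.exp (-1)) * ρ ^ (-(min s 1)) ≤
      ∫ x in Ioi (0:ℝ), (1 + ρ * x) ^ (-s) * Real.exp (-x) := by
  have hρ0 : 0 < ρ := by linarith
  rcases le_total s 1 with h | h
  · rw [min_eq_left h]
    refine le_trans ?_ (siso_aux_lower s ρ 1 hs hρ0 one_pos le_rfl)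
    have h1 : (2 * ρ) ^ (-s) ≤ (1 + ρ * 1) ^ (-s) :=
      Real.rpow_le_rpow_of_nonpos (by linarith) (by linarith) (by linarith)
    rw [Real.mul_rpow (by norm_num) hρ0.le] at h1
    nlinarith [Real.exp_pos (-1)]
  · rw [min_eq_right h]
    refine le_trans (le_of_eq ?_) (siso_aux_lower s ρ ρ⁻¹ hs hρ0 (by positivity) (inv_le_one_of_one_le₀ hρ))
    rw [mul_inv_cancel₀ hρ0.ne', Real.rpow_neg_one, one_add_one_eq_two]
    ring

lemma siso_aux_pos (s ρ : ℝ) (hs : 0 < s) (hρ : 1 ≤ ρ) :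
    0 < ∫ x in Ioi (0:ℝ), (1 + ρ * x) ^ (-s) * Real.exp (-x) := by
  have hρ0 : 0 < ρ := by linarith
  exact lt_of_lt_of_le (by positivity) (siso_aux_lower' s ρ hs hρ)

lemma siso_aux_lim (t C : ℝ) :
    Tendsto (fun ρ : ℝ => t - C / Real.log ρ) atTop (nhds t) := by
  simpa using (tendsto_const_nhds (x := t)).sub
    ((tendsto_const_nhds (x := C)).div_atTop Real.tendsto_log_atTop)

lemma siso_aux_main (s : ℝ) (hs : 0 < s) :
    Tendsto
      (fun ρ : ℝ =>
        -Real.log (∫ x in Ioi (0:ℝ), (1 + ρ * x) ^ (-s) * Real.exp (-x)) / Real.log ρ)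
      atTop (nhds (min s 1)) := by
  rw [tendsto_order]
  constructor
  · intro a ha
    obtain ⟨t, ht, htm⟩ := exists_between (max_lt ha (lt_min hs one_pos))
    have hta : a < t := (le_max_left _ _).trans_lt ht
    have ht0 : 0 < t := (le_max_right _ _).trans_lt ht
    have hts : t < s := htm.trans_le (min_le_left _ _)
    have ht1 : t < 1 := htm.trans_le (min_le_right _ _)
    have hG : 0 < Real.Gamma (1 - t) := Real.Gamma_pos_of_pos (by linarith)
    filter_upwards [(siso_aux_lim t (Real.log (Real.Gamma (1 - t)))).eventually_const_lt hta,
      eventually_gt_atTop 1] with ρ h1 hρ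
    have hρ0 : 0 < ρ := by linarith
    have hl : 0 < Real.log ρ := Real.log_pos hρ
    refine h1.trans_le ?_
    have h := Real.log_le_log (siso_aux_pos s ρ hs hρ.le)
      (siso_aux_upper s t ρ hs ht0 ht1 hts.le hρ0)
    rw [Real.log_mul (by positivity) hG.ne', Real.log_rpow hρ0] at h
    rw [le_div_iff₀ hl, sub_mul, div_mul_cancel₀ _ hl.ne']
    linarith
  · intro a ha
    filter_upwards [(siso_aux_lim (min s 1)
      (Real.log (2 ^ (-s) * Real.exp (-1)))).eventually_lt_const ha,
      eventually_gt_atTop 1] with ρ h1 hρ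
    have hρ0 : 0 < ρ := by linarith
    have hl : 0 < Real.log ρ := Real.log_pos hρ
    refine lt_of_le_of_lt ?_ h1
    have h := Real.log_le_log (by positivity) (siso_aux_lower' s ρ hs hρ.le)
    rw [Real.log_mul (by positivity) (by positivity), Real.log_rpow hρ0] at h
    rw [div_le_iff₀ hl, sub_mul, div_mul_cancel₀ _ hl.ne']
    linarith

/-- **SISO distortion SNR exponent.** For every `s > 0`,
`lim_{ρ→∞} -ln(∫₀^∞ (1+ρx)^{-s} e^{-x} dx)/ln ρ = min(s,1)`; consequently, for
bandwidth ratio `η > 0` and normalized delay `τₙ > 0` (so `s = η/τₙ`), the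
buffered distortion `D(ρ) = (∫₀^∞ (1+ρx)^{-η/τₙ} e^{-x} dx)^{τₙ}` satisfies
`lim_{ρ→∞} -ln D(ρ)/ln ρ = min(η, τₙ)`. -/
theorem siso_snr_exponent (s : ℝ) (hs : 0 < s) (η τ : ℝ) (hη : 0 < η) (hτ : 0 < τ) :
    Tendsto
      (fun ρ : ℝ =>
        -Real.log (∫ x in Ioi (0:ℝ), (1 + ρ * x) ^ (-s) * Real.exp (-x)) / Real.log ρ)
      atTop (nhds (min s 1)) ∧
    Tendsto
      (fun ρ : ℝ =>
        -Real.log ((∫ x in Ioi (0:ℝ), (1 + ρ * x) ^ (-(η / τ)) * Real.exp (-x)) ^ τ) /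
          Real.log ρ)
      atTop (nhds (min η τ)) := by
  refine ⟨siso_aux_main s hs, ?_⟩
  have hm : min η τ = τ * min (η / τ) 1 := by
    rw [mul_min_of_nonneg _ _ hτ.le, mul_div_cancel₀ _ hτ.ne', mul_one]
  rw [hm]
  refine ((siso_aux_main (η / τ) (div_pos hη hτ)).const_mul τ).congr' ?_
  filter_upwards [eventually_ge_atTop 1] with ρ hρ
  rw [Real.log_rpow (siso_aux_pos _ ρ (div_pos hη hτ) hρ)]
  ring
end

section
/- Let m ≥ 1 be an integer and s > 0. Then lim_{ρ→∞} -ln((1/(m-1)!) ∫₀^∞ (1+ρx)^{-s} x^{m-1} e^{-x} dx)/ln ρ = min(s, m). Consequently, for the buffered SIMO Rayleigh channel with m receive antennas, bandwidth ratio η > 0 and normalized delay τₙ > 0 (so s = η/τₙ), the distortion SNR exponent is min(η, m·τₙ). (This is the SIMO/MISO case of Theorem 4: below the corner point η = τₙ m the system is degrees-of-freedom limited, above it diversity limited.) -/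
open MeasureTheory Real Filter Set

lemma simo_lim (F : ℝ → ℝ) (a C : ℝ) (ha : 0 < a) (hC : 0 < C)
    (h1 : ∀ ρ, 1 ≤ ρ → C * ρ ^ (-a) ≤ F ρ)
    (h2 : ∀ t, 0 < t → t < a → ∃ K, 0 < K ∧ ∀ ρ, 1 ≤ ρ → F ρ ≤ K * ρ ^ (-t)) :
    Tendsto (fun ρ => -Real.log (F ρ) / Real.log ρ) atTop (nhds a) := by
  have key : ∀ K b : ℝ, Tendsto (fun ρ : ℝ => b - Real.log K / Real.log ρ) atTop (nhds b) := by
    intro K b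
    have := (tendsto_const_nhds (x := b) (f := atTop)).sub
      (Real.tendsto_log_atTop.const_div_atTop (Real.log K))
    simpa using this
  have lg : ∀ K b ρ : ℝ, 0 < K → 1 < ρ →
      Real.log (K * ρ ^ (-b)) = Real.log K - b * Real.log ρ := by
    intro K b ρ hK hρ
    have h0 : 0 < ρ := by linarith
    rw [Real.log_mul hK.ne' (Real.rpow_pos_of_pos h0 _).ne', Real.log_rpow h0]
    ring
  rw [tendsto_order]
  constructor
  · intro l hl
    obtain ⟨t, ht1, ht2⟩ := exists_between (max_lt hl ha)
    obtain ⟨K, hK, hb⟩ := h2 t (lt_of_le_of_lt (le_max_right _ _) ht1) ht2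
    have hlt : l < t := lt_of_le_of_lt (le_max_left _ _) ht1
    filter_upwards [(key K t).eventually (lt_mem_nhds hlt), eventually_gt_atTop 1] with ρ h3 h4
    refine h3.trans_le ?_
    have hL := Real.log_pos h4
    have hF : 0 < F ρ := lt_of_lt_of_le
      (mul_pos hC (Real.rpow_pos_of_pos (by linarith) _)) (h1 ρ h4.le)
    have h5 := Real.log_le_log hF (hb ρ h4.le)
    rw [lg K t ρ hK h4] at h5
    rw [le_div_iff₀ hL, sub_mul, div_mul_cancel₀ _ hL.ne']
    linarith
  · intro u hu
    filter_upwards [(key C a).eventually (gt_mem_nhds hu), eventually_gt_atTop 1] with ρ h3 h4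
    refine lt_of_le_of_lt ?_ h3
    have hL := Real.log_pos h4
    have h5 := Real.log_le_log
      (mul_pos hC (Real.rpow_pos_of_pos (by linarith) _)) (h1 ρ h4.le)
    rw [lg C a ρ hC h4] at h5
    rw [div_le_iff₀ hL, sub_mul, div_mul_cancel₀ _ hL.ne']
    linarith

lemma simo_integrable (m : ℕ) (s : ℝ) (hs : 0 < s) (ρ : ℝ) (hρ : 0 ≤ ρ) :
    IntegrableOn (fun x : ℝ => (1 + ρ * x) ^ (-s) * x ^ m * Real.exp (-x)) (Ioi 0) := by
  have h := Real.GammaIntegral_convergent (s := (m : ℝ) + 1) (by positivity)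
  refine Integrable.mono' h (by fun_prop) ?_
  refine (ae_restrict_iff' measurableSet_Ioi).2 (ae_of_all _ fun x hx => ?_)
  have hx : 0 < x := hx
  have h1 : (1:ℝ) ≤ 1 + ρ * x := by nlinarith [mul_nonneg hρ hx.le]
  have h0 : (0:ℝ) < 1 + ρ * x := by linarith
  have h2 : (1 + ρ * x) ^ (-s) ≤ 1 := Real.rpow_le_one_of_one_le_of_nonpos h1 (by linarith)
  have h3 := Real.rpow_pos_of_pos h0 (-s)
  rw [Real.norm_of_nonneg (by positivity), add_sub_cancel_right, Real.rpow_natCast]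
  have h4 : 0 < x ^ m * Real.exp (-x) := by positivity
  nlinarith

lemma simo_scale (m : ℕ) (s : ℝ) (ρ : ℝ) (hρ : 0 < ρ) :
    ρ ^ (-((m : ℝ) + 1)) *
      ∫ x in Ioi (0:ℝ), (1 + x) ^ (-s) * x ^ m * Real.exp (-(x / ρ)) =
    ∫ x in Ioi (0:ℝ), (1 + ρ * x) ^ (-s) * x ^ m * Real.exp (-x) := by
  have h := integral_comp_mul_left_Ioi
    (fun x : ℝ => (1 + x) ^ (-s) * x ^ m * Real.exp (-(x / ρ))) 0 hρ
  rw [mul_zero, smul_eq_mul] at h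
  have e : ρ ^ (-((m : ℝ) + 1)) = (ρ ^ m)⁻¹ * ρ⁻¹ := by
    rw [Real.rpow_neg hρ.le, Real.rpow_add hρ, Real.rpow_natCast, Real.rpow_one, mul_inv]
  rw [e, mul_assoc, ← h, ← integral_const_mul]
  refine setIntegral_congr_fun measurableSet_Ioi fun x hx => ?_
  have : ρ * x / ρ = x := by field_simp
  simp only [this, mul_pow]
  field_simp

lemma simo_one (m : ℕ) (s : ℝ) (hs : 0 < s) :
    Tendsto
      (fun ρ : ℝ =>
        -Real.log ((1 / (Nat.factorial m : ℝ)) *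
            ∫ x in Ioi (0:ℝ), (1 + ρ * x) ^ (-s) * x ^ m * Real.exp (-x)) /
          Real.log ρ)
      atTop (nhds (min s (m + 1))) ∧
    ∀ ρ : ℝ, 1 ≤ ρ → 0 < (1 / (Nat.factorial m : ℝ)) *
            ∫ x in Ioi (0:ℝ), (1 + ρ * x) ^ (-s) * x ^ m * Real.exp (-x) := by
  have hc : 0 < 1 / (Nat.factorial m : ℝ) := by positivity
  generalize 1 / (Nat.factorial m : ℝ) = c at hc ⊢
  have hI : ∀ ρ : ℝ, 0 ≤ ρ →
      0 < ∫ x in Ioi (0:ℝ), (1 + ρ * x) ^ (-s) * x ^ m * Real.exp (-x) := by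
    intro ρ hρ
    have hp : ∀ x ∈ Ioi (0:ℝ), 0 < (1 + ρ * x) ^ (-s) * x ^ m * Real.exp (-x) := by
      intro x hx
      have hx : 0 < x := hx
      positivity
    rw [setIntegral_pos_iff_support_of_nonneg_ae
      ((ae_restrict_iff' measurableSet_Ioi).2 (ae_of_all _ fun x hx => (hp x hx).le))
      (simo_integrable m s hs ρ hρ)]
    have hsub : Ioi (0:ℝ) ⊆
        Function.support (fun x : ℝ => (1 + ρ * x) ^ (-s) * x ^ m * Real.exp (-x)) :=
      fun x hx => Function.mem_support.2 (hp x hx).ne'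
    rw [Set.inter_eq_right.2 hsub]
    simp
  refine ⟨?_, fun ρ hρ => mul_pos hc (hI ρ (by linarith))⟩
  refine simo_lim _ _
    (c * ∫ x in Ioi (0:ℝ), (1 + 1 * x) ^ (-s) * x ^ m * Real.exp (-x))
    (lt_min hs (by positivity)) (mul_pos hc (hI 1 zero_le_one)) ?_ ?_
  · intro ρ hρ
    have h0 : 0 < ρ := by linarith
    rw [mul_assoc]
    refine mul_le_mul_of_nonneg_left ?_ hc.le
    rcases min_choice s ((m:ℝ) + 1) with h | h <;> rw [h]
    · rw [← integral_mul_const]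
      refine setIntegral_mono_on ((simo_integrable m s hs 1 zero_le_one).mul_const _)
        (simo_integrable m s hs ρ h0.le) measurableSet_Ioi fun x hx => ?_
      have hx : 0 < x := hx
      have h1 : (ρ * (1 + 1 * x)) ^ (-s) ≤ (1 + ρ * x) ^ (-s) :=
        Real.rpow_le_rpow_of_nonpos (by positivity) (by nlinarith) (by linarith)
      rw [Real.mul_rpow h0.le (by positivity)] at h1
      have h4 : 0 < x ^ m * Real.exp (-x) := by positivity
      nlinarith
    · rw [← simo_scale m s ρ h0, mul_comm]
      refine mul_le_mul_of_nonneg_left ?_ (by positivity)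
      have hint : IntegrableOn (fun x : ℝ => (1 + x) ^ (-s) * x ^ m * Real.exp (-(x / ρ)))
          (Ioi 0) := by
        by_contra hn
        have h5 := simo_scale m s ρ h0
        rw [integral_undef hn, mul_zero] at h5
        exact (hI ρ h0.le).ne h5
      refine setIntegral_mono_on (simo_integrable m s hs 1 zero_le_one)
        hint measurableSet_Ioi fun x hx => ?_
      have hx : 0 < x := hx
      have : x / ρ ≤ x := div_le_self hx.le hρ
      rw [one_mul]
      gcongr
  · intro t ht hta
    have hts : t < s := hta.trans_le (min_le_left _ _)
    have htm : t < m + 1 := hta.trans_le (min_le_right _ _)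
    have hg : 0 < (m:ℝ) + 1 - t := by linarith
    refine ⟨c * Real.Gamma (m + 1 - t), mul_pos hc (Real.Gamma_pos_of_pos hg), ?_⟩
    intro ρ hρ
    have h0 : 0 < ρ := by linarith
    rw [mul_assoc]
    refine mul_le_mul_of_nonneg_left ?_ hc.le
    rw [Real.Gamma_eq_integral hg, ← integral_mul_const]
    refine setIntegral_mono_on (simo_integrable m s hs ρ h0.le)
      ((Real.GammaIntegral_convergent hg).mul_const _) measurableSet_Ioi fun x hx => ?_
    have hx : 0 < x := hx
    have h1 : (1 + ρ * x) ^ (-s) ≤ (1 + ρ * x) ^ (-t) :=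
      Real.rpow_le_rpow_of_exponent_le (by nlinarith [mul_pos h0 hx]) (by linarith)
    have h2 : (1 + ρ * x) ^ (-t) ≤ (ρ * x) ^ (-t) :=
      Real.rpow_le_rpow_of_nonpos (by positivity) (by linarith) (by linarith)
    rw [Real.mul_rpow h0.le hx.le] at h2
    have e : x ^ ((m:ℝ) + 1 - t - 1) = x ^ m * x ^ (-t) := by
      rw [← Real.rpow_natCast, ← Real.rpow_add hx]; congr 1; ring
    rw [e]
    have h4 : 0 < x ^ m * Real.exp (-x) := by positivity
    nlinarith [h1.trans h2]

/-- **SIMO/MISO distortion SNR exponent.** For an integer `m ≥ 1` and `s > 0`,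
`lim_{ρ→∞} -ln((1/(m-1)!) ∫₀^∞ (1+ρx)^{-s} x^{m-1} e^{-x} dx)/ln ρ = min(s,m)`;
consequently, for bandwidth ratio `η > 0` and normalized delay `τₙ > 0`
(so `s = η/τₙ`), the buffered SIMO distortion SNR exponent is `min(η, m·τₙ)`. -/
theorem simo_snr_exponent (m : ℕ) (hm : 1 ≤ m) (s : ℝ) (hs : 0 < s)
    (η τ : ℝ) (hη : 0 < η) (hτ : 0 < τ) :
    Tendsto
      (fun ρ : ℝ =>
        -Real.log ((1 / (Nat.factorial (m - 1) : ℝ)) *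
            ∫ x in Ioi (0:ℝ), (1 + ρ * x) ^ (-s) * x ^ (m - 1) * Real.exp (-x)) /
          Real.log ρ)
      atTop (nhds (min s m)) ∧
    Tendsto
      (fun ρ : ℝ =>
        -Real.log (((1 / (Nat.factorial (m - 1) : ℝ)) *
              ∫ x in Ioi (0:ℝ), (1 + ρ * x) ^ (-(η / τ)) * x ^ (m - 1) * Real.exp (-x)) ^ τ) /
          Real.log ρ)
      atTop (nhds (min η ((m : ℝ) * τ))) := by
  obtain ⟨k, rfl⟩ : ∃ k, m = k + 1 := ⟨m - 1, by omega⟩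
  simp only [Nat.add_sub_cancel]
  push_cast
  refine ⟨(simo_one k s hs).1, ?_⟩
  obtain ⟨h1, h2⟩ := simo_one k (η / τ) (div_pos hη hτ)
  have h3 := h1.const_mul τ
  have e : τ * min (η / τ) ((k:ℝ) + 1) = min η (((k:ℝ) + 1) * τ) := by
    rw [mul_min_of_nonneg _ _ hτ.le, mul_div_cancel₀ _ hτ.ne', mul_comm τ]
  rw [e] at h3
  refine h3.congr' ?_
  filter_upwards [eventually_ge_atTop 1] with ρ hρ
  rw [Real.log_rpow (h2 ρ hρ)]
  ring
end
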